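/- For α > 0, the Fourier transform of the p-adic Bessel kernel J_α (namely J_α(x) = Γ_p(α)^{-1}(|x|_p^{α−1} − p^{α−1})1_{ℤ_p}(x) for α ≠ 1, and J_1(x) = (1−p^{-1}) log_p(p/|x|_p) 1_{ℤ_p}(x) for α = 1) is Ĵ_α(ξ) = (max{1, |ξ|_p})^{−α} for all ξ ∈ ℚ_p. -/

import Mathlib

open MeasureTheory

/-!
On `ℤ_p ∖ {0}` summing a finite geometric progression turns the kernel into
`J_α = ∑ₙ (1 - p^{-α}) p^{n(1-α)} 1_{pⁿℤ_p}`, for `α ≠ 1` and `α = 1` alike. A nontrivial character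
integrates to zero over a subgroup, so the Fourier transform of `1_{pⁿℤ_p}` at `ξ` is `p⁻ⁿ` if
`|ξ| ≤ pⁿ` and `0` otherwise. Since `α > 0`, the series converges in `L¹` and may be transformed
term by term; the transform is thus the tail `∑_{pⁿ ≥ |ξ|} (1 - p^{-α}) p^{-nα}` of a geometric
series, which starts at `pⁿ = max(1, |ξ|)` and telescopes to `max(1, |ξ|)^{-α}`.
-/

open Metric

section Characters

theorem continuous_addChar_of_eventually_eq_one {G M : Type*} [AddGroup G] [TopologicalSpace G]
    [IsTopologicalAddGroup G] [CommMonoid M] [TopologicalSpace M] {ψ : AddChar G M}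
    (hψ : ∀ᶠ x in nhds 0, ψ x = 1) : Continuous ψ := by
  refine IsLocallyConstant.continuous ((IsLocallyConstant.iff_eventually_eq ψ).2 fun x ↦ ?_)
  have hsub : Filter.Tendsto (fun y ↦ y - x) (nhds x) (nhds 0) := by
    simpa only [sub_self] using (continuous_sub_right x).tendsto x
  filter_upwards [hsub.eventually hψ] with y hy
  rw [← sub_add_cancel y x, ψ.map_add_eq_mul, hy, one_mul]

theorem setIntegral_addChar_addSubgroup_eq_zero {G 𝕜 : Type*} [AddGroup G] [MeasurableSpace G]
    [MeasurableAdd G] [RCLike 𝕜] {μ : Measure G} [μ.IsAddRightInvariant] {H : AddSubgroup G}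
    (hH : MeasurableSet (H : Set G)) {ψ : AddChar G 𝕜} {b : G} (hb : b ∈ H) (hψb : ψ b ≠ 1) :
    ∫ x in H, ψ x ∂μ = 0 := by
  rw [← integral_indicator hH]
  set I := ∫ x, (H : Set G).indicator ψ x ∂μ
  have translate (x : G) :
      (H : Set G).indicator ψ (x + b) = (H : Set G).indicator ψ x * ψ b := by
    by_cases hx : x ∈ H
    · simp [hx, hb, H.add_mem, ψ.map_add_eq_mul]
    · simp [hx, H.add_mem_cancel_right hb]
  have hI : I = I * ψ b := by
    calc I = ∫ x, (H : Set G).indicator ψ (x + b) ∂μ := (integral_add_right_eq_self _ b).symm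
      _ = I * ψ b := by simp_rw [translate, integral_mul_const, I]
  by_contra hI0
  exact hψb (mul_left_cancel₀ hI0 (by rw [← hI, mul_one]))

end Characters

theorem hasSum_geometric_tail {K : Type*} [NormedField K] {q : K} (hq : ‖q‖ < 1) (m : ℕ) :
    HasSum (fun n ↦ if m ≤ n then (1 - q) * q ^ n else 0) (q ^ m) := by
  have hq1 : 1 - q ≠ 0 := sub_ne_zero.2 fun h ↦ by simp [← h] at hq
  rw [← hasSum_nat_add_iff' m, Finset.sum_eq_zero fun n hn ↦ if_neg (by simpa using hn), sub_zero]
  have hscaled := (hasSum_geometric_of_norm_lt_one hq).mul_left ((1 - q) * q ^ m)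
  rw [mul_right_comm, mul_inv_cancel₀ hq1, one_mul] at hscaled
  refine hscaled.congr_fun fun n ↦ ?_
  rw [if_pos (Nat.le_add_left m n), mul_assoc, ← pow_add, add_comm]

section PadicBalls

variable {p : ℕ} [Fact p.Prime]

variable (p) in
theorem one_lt_cast_prime : (1 : ℝ) < p :=
  Nat.one_lt_cast.2 (Fact.out : p.Prime).one_lt

theorem exists_padic_norm_eq_zpow_neg {x : ℚ_[p]} (hx0 : x ≠ 0) (hx : ‖x‖ ≤ 1) :
    ∃ k : ℕ, ‖x‖ = (p : ℝ) ^ (-k : ℤ) := by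
  obtain ⟨k, hk⟩ := Int.eq_ofNat_of_zero_le ((Padic.norm_le_one_iff_val_nonneg x).1 hx)
  exact ⟨k, by rw [Padic.norm_eq_zpow_neg_valuation hx0, hk]⟩

theorem exists_max_one_padic_norm_eq_pow (ξ : ℚ_[p]) : ∃ m : ℕ, max 1 ‖ξ‖ = (p : ℝ) ^ m := by
  rcases le_or_gt ‖ξ‖ 1 with hξ | hξ
  · exact ⟨0, by rw [max_eq_left hξ, pow_zero]⟩
  · have hξ0 : ξ ≠ 0 := norm_pos_iff.1 (one_pos.trans hξ)
    obtain ⟨m, hm⟩ := exists_padic_norm_eq_zpow_neg (inv_ne_zero hξ0)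
      (by rw [norm_inv]; exact inv_le_one_of_one_le₀ hξ.le)
    rw [norm_inv, zpow_neg, zpow_natCast, inv_inj] at hm
    exact ⟨m, by rw [max_eq_right hξ.le, hm]⟩

theorem closedBall_one_eq_biUnion_closedBall_natCast (n : ℕ) :
    closedBall (0 : ℚ_[p]) 1 =
      ⋃ a ∈ Finset.range (p ^ n), closedBall (a : ℚ_[p]) ((p : ℝ) ^ (-n : ℤ)) := by
  ext x
  simp only [Set.mem_iUnion, mem_closedBall, dist_eq_norm, sub_zero, Finset.mem_range,
    exists_prop]
  constructor
  · intro hx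
    let y : ℤ_[p] := ⟨x, hx⟩
    have happr := (PadicInt.norm_le_pow_iff_mem_span_pow _ n).2 (y.appr_spec n)
    rw [PadicInt.norm_def, PadicInt.coe_sub, PadicInt.coe_natCast] at happr
    exact ⟨y.appr n, y.appr_lt n, happr⟩
  · rintro ⟨a, -, ha⟩
    have hball : (p : ℝ) ^ (-n : ℤ) ≤ 1 :=
      zpow_le_one_of_nonpos₀ (one_lt_cast_prime p).le (by simp)
    calc ‖x‖ = ‖(x - a) + ((a : ℤ) : ℚ_[p])‖ := by simp
      _ ≤ max ‖x - a‖ ‖((a : ℤ) : ℚ_[p])‖ := IsUltrametricDist.norm_add_le_max _ _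
      _ ≤ 1 := max_le (ha.trans hball) (Padic.norm_int_le_one _)

theorem pairwiseDisjoint_closedBall_natCast (n : ℕ) :
    (Finset.range (p ^ n) : Set ℕ).PairwiseDisjoint
      fun a ↦ closedBall (a : ℚ_[p]) ((p : ℝ) ^ (-n : ℤ)) := by
  intro a ha b hb hab
  refine (IsUltrametricDist.closedBall_eq_or_disjoint _ _ _).resolve_left fun heq ↦ hab ?_
  have hmem : (a : ℚ_[p]) ∈ closedBall (b : ℚ_[p]) ((p : ℝ) ^ (-n : ℤ)) :=
    heq ▸ mem_closedBall_self (by positivity)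
  have hdvd : ((p ^ n : ℕ) : ℤ) ∣ a - b := by
    rw [Nat.cast_pow, ← Padic.norm_int_le_pow_iff_dvd]
    simpa [dist_eq_norm] using hmem
  exact (Nat.modEq_iff_dvd.2 hdvd).symm.eq_of_lt_of_lt (by simpa using ha) (by simpa using hb)

variable [MeasurableSpace ℚ_[p]] [BorelSpace ℚ_[p]] (μ : Measure ℚ_[p]) [μ.IsAddHaarMeasure]

theorem pow_mul_measure_padic_closedBall (n : ℕ) :
    (p : ENNReal) ^ n * μ (closedBall 0 ((p : ℝ) ^ (-n : ℤ))) = μ (closedBall 0 1) := by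
  rw [closedBall_one_eq_biUnion_closedBall_natCast n,
    measure_biUnion_finset (pairwiseDisjoint_closedBall_natCast n)
      fun _ _ ↦ measurableSet_closedBall]
  simp [Measure.addHaar_closedBall_center]

theorem measureReal_padic_closedBall (hμ : μ (closedBall 0 1) = 1) (n : ℕ) :
    μ.real (closedBall 0 ((p : ℝ) ^ (-n : ℤ))) = ((p : ℝ) ^ n)⁻¹ := by
  refine eq_inv_of_mul_eq_one_right ?_
  simpa [Measure.real, hμ] using congrArg ENNReal.toReal (pow_mul_measure_padic_closedBall μ n)

end PadicBalls

section PadicCharacters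

variable {p : ℕ} [Fact p.Prime] {χ : AddChar ℚ_[p] ℂ}

theorem continuous_padic_addChar (hχ₁ : ∀ x : ℚ_[p], ‖x‖ ≤ 1 → χ x = 1) : Continuous χ := by
  refine continuous_addChar_of_eventually_eq_one ?_
  filter_upwards [closedBall_mem_nhds (0 : ℚ_[p]) one_pos] with x hx
  exact hχ₁ x (mem_closedBall_zero_iff.1 hx)

theorem norm_padic_addChar (hχ₁ : ∀ x : ℚ_[p], ‖x‖ ≤ 1 → χ x = 1) (x : ℚ_[p]) : ‖χ x‖ = 1 := by
  obtain ⟨k, hk⟩ := pow_unbounded_of_one_lt ‖x‖ (one_lt_cast_prime p)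
  have hpow : χ x ^ p ^ k = 1 := by
    rw [← χ.map_nsmul_eq_pow]
    refine hχ₁ _ ?_
    rw [nsmul_eq_mul, Nat.cast_pow, norm_mul, norm_pow, Padic.norm_p, inv_pow]
    exact inv_mul_le_one_of_le₀ hk.le (by positivity)
  exact Complex.norm_eq_one_of_pow_eq_one hpow (pow_ne_zero k (Fact.out : p.Prime).ne_zero)

variable [MeasurableSpace ℚ_[p]] [BorelSpace ℚ_[p]] (μ : Measure ℚ_[p])

theorem setIntegral_padic_addChar_closedBall_eq_zero [μ.IsAddRightInvariant]
    (hχ₂ : ∀ x : ℚ_[p], 1 < ‖x‖ → χ x ≠ 1) {n : ℤ} {ξ : ℚ_[p]} (hξ : (p : ℝ) ^ n < ‖ξ‖) :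
    ∫ x in closedBall 0 ((p : ℝ) ^ (-n)), χ (ξ * x) ∂μ = 0 := by
  have hp : (0 : ℝ) < p := one_pos.trans (one_lt_cast_prime p)
  let B := IsUltrametricDist.closedBall_openAddSubgroup ℚ_[p] (zpow_pos hp (-n))
  have hmem : (p : ℚ_[p]) ^ n ∈ B.toAddSubgroup :=
    mem_closedBall_zero_iff.2 (Padic.norm_p_zpow n).le
  refine setIntegral_addChar_addSubgroup_eq_zero (H := B.toAddSubgroup) (ψ := χ.mulShift ξ)
    measurableSet_closedBall hmem (hχ₂ _ ?_)
  rw [AddMonoidHom.coe_mulLeft, norm_mul, Padic.norm_p_zpow, zpow_neg, ← div_eq_mul_inv]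
  exact (one_lt_div (zpow_pos hp n)).2 hξ

theorem setIntegral_padic_addChar_closedBall [μ.IsAddRightInvariant]
    (hχ₁ : ∀ x : ℚ_[p], ‖x‖ ≤ 1 → χ x = 1) (hχ₂ : ∀ x : ℚ_[p], 1 < ‖x‖ → χ x ≠ 1)
    (n : ℤ) (ξ : ℚ_[p]) :
    ∫ x in closedBall 0 ((p : ℝ) ^ (-n)), χ (ξ * x) ∂μ =
      if ‖ξ‖ ≤ (p : ℝ) ^ n then (μ.real (closedBall 0 ((p : ℝ) ^ (-n))) : ℂ) else 0 := by
  split_ifs with hξ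
  · have hp : (0 : ℝ) < p := one_pos.trans (one_lt_cast_prime p)
    have trivial_on_ball : ∀ x ∈ closedBall (0 : ℚ_[p]) ((p : ℝ) ^ (-n)), χ (ξ * x) = 1 := by
      intro x hx
      refine hχ₁ _ ?_
      calc ‖ξ * x‖ = ‖ξ‖ * ‖x‖ := norm_mul ξ x
        _ ≤ (p : ℝ) ^ n * (p : ℝ) ^ (-n) := by gcongr; exact mem_closedBall_zero_iff.1 hx
        _ = 1 := by rw [← zpow_add₀ hp.ne', add_neg_cancel, zpow_zero]
    rw [setIntegral_congr_fun measurableSet_closedBall trivial_on_ball, setIntegral_const,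
      Complex.real_smul, mul_one]
  · exact setIntegral_padic_addChar_closedBall_eq_zero μ hχ₂ (not_le.1 hξ)

end PadicCharacters

section BallSeries

variable {p : ℕ} [Fact p.Prime]

/-- The radial function `∑ₙ cₙ 1_{pⁿℤ_p}` on `ℚ_p`, with `pⁿℤ_p` encoded as the closed ball of
radius `p⁻ⁿ`. The sum is finite away from `0`. At `0` it is `∑ₙ cₙ`, hence `0` by convention when
that series diverges. -/
noncomputable def ballSeries (c : ℕ → ℂ) (x : ℚ_[p]) : ℂ :=
  ∑' n : ℕ, (closedBall (0 : ℚ_[p]) ((p : ℝ) ^ (-n : ℤ))).indicator (fun _ ↦ c n) x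

theorem ballSeries_of_norm_eq (c : ℕ → ℂ) {x : ℚ_[p]} {k : ℕ} (hx : ‖x‖ = (p : ℝ) ^ (-k : ℤ)) :
    ballSeries c x = ∑ n ∈ Finset.range (k + 1), c n := by
  have mem_ball_iff (n : ℕ) :
      x ∈ closedBall (0 : ℚ_[p]) ((p : ℝ) ^ (-n : ℤ)) ↔ n ∈ Finset.range (k + 1) := by
    rw [mem_closedBall_zero_iff, hx, zpow_le_zpow_iff_right₀ (one_lt_cast_prime p),
      Finset.mem_range]
    omega
  rw [ballSeries, tsum_eq_sum fun n hn ↦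
    Set.indicator_of_notMem (mt (mem_ball_iff n).1 hn) _]
  exact Finset.sum_congr rfl fun n hn ↦ Set.indicator_of_mem ((mem_ball_iff n).2 hn) _

theorem ballSeries_of_one_lt_norm (c : ℕ → ℂ) {x : ℚ_[p]} (hx : 1 < ‖x‖) :
    ballSeries c x = 0 := by
  have notMem_ball (n : ℕ) : x ∉ closedBall (0 : ℚ_[p]) ((p : ℝ) ^ (-n : ℤ)) := by
    rw [mem_closedBall_zero_iff, not_le]
    exact (zpow_le_one_of_nonpos₀ (one_lt_cast_prime p).le (by simp)).trans_lt hx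
  simp only [ballSeries, Set.indicator_of_notMem (notMem_ball _), tsum_zero]

theorem hasSum_integral_ballSeries_mul_addChar [MeasurableSpace ℚ_[p]] [BorelSpace ℚ_[p]]
    (μ : Measure ℚ_[p]) [μ.IsAddHaarMeasure] {χ : AddChar ℚ_[p] ℂ}
    (hχ₁ : ∀ x : ℚ_[p], ‖x‖ ≤ 1 → χ x = 1) (hχ₂ : ∀ x : ℚ_[p], 1 < ‖x‖ → χ x ≠ 1) {c : ℕ → ℂ}
    (hc : Summable fun n : ℕ ↦ ‖c n‖ * μ.real (closedBall 0 ((p : ℝ) ^ (-n : ℤ)))) (ξ : ℚ_[p]) :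
    HasSum (fun n : ℕ ↦ if ‖ξ‖ ≤ (p : ℝ) ^ n then
        c n * μ.real (closedBall 0 ((p : ℝ) ^ (-n : ℤ))) else 0)
      (∫ x, ballSeries c x * χ (ξ * x) ∂μ) := by
  let B (n : ℕ) := closedBall (0 : ℚ_[p]) ((p : ℝ) ^ (-n : ℤ))
  let F (n : ℕ) (x : ℚ_[p]) : ℂ := (B n).indicator (fun _ ↦ c n) x * χ (ξ * x)
  have hF_eq (n : ℕ) : F n = (B n).indicator fun x ↦ c n * χ (ξ * x) := by
    ext x
    simp only [F, Set.indicator_mul_left]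
  have hF_integrable (n : ℕ) : Integrable (F n) μ := by
    have hcont : Continuous fun x ↦ c n * χ (ξ * x) :=
      continuous_const.mul ((continuous_padic_addChar hχ₁).comp (continuous_const_mul ξ))
    rw [hF_eq, integrable_indicator_iff measurableSet_closedBall]
    exact hcont.continuousOn.integrableOn_compact (isCompact_closedBall _ _)
  have hF_norm (n : ℕ) : ∫ x, ‖F n x‖ ∂μ = ‖c n‖ * μ.real (B n) := by
    simp only [F, norm_mul, norm_padic_addChar hχ₁, mul_one, norm_indicator_eq_indicator_norm]
    rw [integral_indicator_const _ measurableSet_closedBall, smul_eq_mul, mul_comm]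
  have hF_integral (n : ℕ) :
      ∫ x, F n x ∂μ = if ‖ξ‖ ≤ (p : ℝ) ^ n then c n * μ.real (B n) else 0 := by
    rw [hF_eq, integral_indicator measurableSet_closedBall, integral_const_mul,
      setIntegral_padic_addChar_closedBall μ hχ₁ hχ₂, zpow_natCast, mul_ite, mul_zero]
  have hsum := hasSum_integral_of_summable_integral_norm hF_integrable
    (by simpa only [hF_norm] using hc)
  simpa only [hF_integral, F, tsum_mul_right, ballSeries, B] using hsum

end BallSeries

section BesselKernel

variable (p : ℕ)

/-- The formula `J_α(x) = Γ_p(α)⁻¹ (|x|^{α-1} - p^{α-1})` of the `p`-adic Bessel kernel, with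
`J_1(x) = (1 - p⁻¹) log_p (p / |x|)`. It is not cut off outside `ℤ_p`. -/
noncomputable def besselKernel [Fact p.Prime] (α : ℝ) (x : ℚ_[p]) : ℝ :=
  if α = 1 then (1 - (p : ℝ)⁻¹) * Real.logb p ((p : ℝ) / ‖x‖)
  else ((1 - (p : ℝ) ^ (α - 1)) / (1 - (p : ℝ) ^ (-α)))⁻¹ *
    (‖x‖ ^ (α - 1) - (p : ℝ) ^ (α - 1))

/-- The coefficient `(1 - p^{-α}) p^{n(1-α)}` of `1_{pⁿℤ_p}` in the expansion of the Bessel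
kernel. -/
noncomputable def besselCoeff (α : ℝ) (n : ℕ) : ℝ :=
  (1 - (p : ℝ) ^ (-α)) * ((p : ℝ) ^ (1 - α)) ^ n

variable [Fact p.Prime]

theorem besselCoeff_mul_inv_pow (α : ℝ) (n : ℕ) :
    besselCoeff p α n * ((p : ℝ) ^ n)⁻¹ = (1 - (p : ℝ) ^ (-α)) * ((p : ℝ) ^ (-α)) ^ n := by
  have hp : (0 : ℝ) < p := one_pos.trans (one_lt_cast_prime p)
  have hratio : (p : ℝ) ^ (1 - α) * (p : ℝ)⁻¹ = (p : ℝ) ^ (-α) := by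
    rw [← Real.rpow_neg_one, ← Real.rpow_add hp]
    ring_nf
  rw [besselCoeff, mul_assoc, ← inv_pow, ← mul_pow, hratio]

variable {p}

theorem besselKernel_one_of_norm_eq {x : ℚ_[p]} {k : ℕ} (hx : ‖x‖ = (p : ℝ) ^ (-k : ℤ)) :
    besselKernel p 1 x = ∑ n ∈ Finset.range (k + 1), besselCoeff p 1 n := by
  have hlog : Real.logb p ((p : ℝ) / ‖x‖) = (k + 1 : ℕ) := by
    rw [hx, zpow_neg, zpow_natCast, div_inv_eq_mul, ← pow_succ', Real.logb_pow,
      Real.logb_self_eq_one (one_lt_cast_prime p), mul_one]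
  have hcoeff (n : ℕ) : besselCoeff p 1 n = 1 - (p : ℝ)⁻¹ := by
    simp [besselCoeff, Real.rpow_neg_one]
  rw [besselKernel, if_pos rfl, hlog, Finset.sum_congr rfl fun n _ ↦ hcoeff n, Finset.sum_const,
    Finset.card_range, nsmul_eq_mul, mul_comm]

theorem besselKernel_of_ne_one_of_norm_eq {α : ℝ} (hα : α ≠ 1) {x : ℚ_[p]} {k : ℕ}
    (hx : ‖x‖ = (p : ℝ) ^ (-k : ℤ)) :
    besselKernel p α x = ∑ n ∈ Finset.range (k + 1), besselCoeff p α n := by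
  have hp : (0 : ℝ) < p := one_pos.trans (one_lt_cast_prime p)
  set r := (p : ℝ) ^ (1 - α) with hr
  have hr0 : r ≠ 0 := (Real.rpow_pos_of_pos hp _).ne'
  have hr1 : r ≠ 1 := by
    rw [← Real.rpow_zero p]
    exact (Real.rpow_right_inj hp (one_lt_cast_prime p).ne').not.2 (sub_ne_zero.2 hα.symm)
  have hpow_p : (p : ℝ) ^ (α - 1) = r⁻¹ := by rw [hr, ← Real.rpow_neg hp.le, neg_sub]
  have hpow_norm : ‖x‖ ^ (α - 1) = r ^ k := by
    rw [hx, hr, ← Real.rpow_intCast, ← Real.rpow_natCast, ← Real.rpow_mul hp.le,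
      ← Real.rpow_mul hp.le]
    push_cast
    ring_nf
  have hr_sub : r - 1 ≠ 0 := sub_ne_zero.2 hr1
  have hinv : 1 - r⁻¹ = (r - 1) / r := by field_simp
  simp only [besselKernel, if_neg hα, besselCoeff, hpow_p, hpow_norm]
  rw [← Finset.mul_sum, geom_sum_eq hr1, inv_div, hinv, pow_succ]
  field_simp

theorem besselKernel_eq_ballSeries (α : ℝ) {x : ℚ_[p]} (hx0 : x ≠ 0) (hx : ‖x‖ ≤ 1) :
    (besselKernel p α x : ℂ) = ballSeries (fun n ↦ (besselCoeff p α n : ℂ)) x := by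
  obtain ⟨k, hk⟩ := exists_padic_norm_eq_zpow_neg hx0 hx
  rw [ballSeries_of_norm_eq _ hk, ← Complex.ofReal_sum]
  rcases eq_or_ne α 1 with rfl | hα
  · rw [besselKernel_one_of_norm_eq hk]
  · rw [besselKernel_of_ne_one_of_norm_eq hα hk]

theorem setIntegral_besselKernel_mul [MeasurableSpace ℚ_[p]] [BorelSpace ℚ_[p]]
    (μ : Measure ℚ_[p]) [NullSingletonClass μ] (α : ℝ) (f : ℚ_[p] → ℂ) :
    ∫ x in closedBall 0 1, (besselKernel p α x : ℂ) * f x ∂μ =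
      ∫ x, ballSeries (fun n ↦ (besselCoeff p α n : ℂ)) x * f x ∂μ := by
  rw [← integral_indicator measurableSet_closedBall]
  refine integral_congr_ae ?_
  filter_upwards [μ.ae_ne 0] with x hx0
  by_cases hx : ‖x‖ ≤ 1
  · rw [Set.indicator_of_mem (mem_closedBall_zero_iff.2 hx), besselKernel_eq_ballSeries α hx0 hx]
  · rw [Set.indicator_of_notMem (mt mem_closedBall_zero_iff.1 hx),
      ballSeries_of_one_lt_norm _ (not_le.1 hx), zero_mul]

theorem summable_norm_besselCoeff_mul_inv_pow {α : ℝ} (hα : 0 < α) :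
    Summable fun n ↦ ‖(besselCoeff p α n : ℂ)‖ * ((p : ℝ) ^ n)⁻¹ := by
  have hp := one_lt_cast_prime p
  have hq1 : (p : ℝ) ^ (-α) < 1 := Real.rpow_lt_one_of_one_lt_of_neg hp (neg_neg_of_pos hα)
  have hcoeff (n : ℕ) : 0 ≤ besselCoeff p α n :=
    mul_nonneg (sub_nonneg.2 hq1.le) (by positivity)
  simp only [Complex.norm_real, Real.norm_of_nonneg (hcoeff _), besselCoeff_mul_inv_pow]
  exact (summable_geometric_of_lt_one (by positivity) hq1).mul_left _

theorem hasSum_besselCoeff_tail {α : ℝ} (hα : 0 < α) (ξ : ℚ_[p]) :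
    HasSum (fun n ↦ if ‖ξ‖ ≤ (p : ℝ) ^ n then besselCoeff p α n * ((p : ℝ) ^ n)⁻¹ else 0)
      ((max 1 ‖ξ‖) ^ (-α)) := by
  have hp := one_lt_cast_prime p
  have hq1 : ‖(p : ℝ) ^ (-α)‖ < 1 := by
    rw [Real.norm_of_nonneg (by positivity)]
    exact Real.rpow_lt_one_of_one_lt_of_neg hp (neg_neg_of_pos hα)
  obtain ⟨m, hm⟩ := exists_max_one_padic_norm_eq_pow ξ
  have norm_le_iff (n : ℕ) : ‖ξ‖ ≤ (p : ℝ) ^ n ↔ m ≤ n := by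
    rw [← pow_le_pow_iff_right₀ hp, ← hm, max_le_iff, and_iff_right (one_le_pow₀ hp.le)]
  simp only [norm_le_iff, besselCoeff_mul_inv_pow, hm]
  rw [← Real.rpow_pow_comm (by positivity)]
  exact hasSum_geometric_tail hq1 m

end BesselKernel

/-- For `α > 0`, the Fourier transform of the p-adic Bessel
kernel `J_α` (with `J_α(x) = Γ_p(α)^{-1}(|x|_p^{α−1} − p^{α−1})1_{ℤ_p}(x)` for
`α ≠ 1` and `J_1(x) = (1−p^{-1}) log_p(p/|x|_p) 1_{ℤ_p}(x)`) is
`Ĵ_α(ξ) = (max{1, |ξ|_p})^{−α}` for all `ξ ∈ ℚ_p`. -/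
theorem bessel_kernel_fourier_transform
    (p : ℕ) [Fact p.Prime]
    [MeasurableSpace ℚ_[p]] [BorelSpace ℚ_[p]]
    (μ : Measure ℚ_[p]) [μ.IsAddHaarMeasure]
    (hμ : μ {x : ℚ_[p] | ‖x‖ ≤ 1} = 1)
    (χ : AddChar ℚ_[p] ℂ)
    (hχ₁ : ∀ x : ℚ_[p], ‖x‖ ≤ 1 → χ x = 1)
    (hχ₂ : ∀ x : ℚ_[p], 1 < ‖x‖ → χ x ≠ 1)
    (α : ℝ) (hα : 0 < α)
    (Jα : ℚ_[p] → ℝ)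
    (hJα : Jα = fun x =>
      if α = 1 then (1 - (p : ℝ)⁻¹) * Real.logb p ((p : ℝ) / ‖x‖)
      else ((1 - (p : ℝ) ^ (α - 1)) / (1 - (p : ℝ) ^ (-α)))⁻¹ *
            (‖x‖ ^ (α - 1) - (p : ℝ) ^ (α - 1))) :
    ∀ ξ : ℚ_[p],
      ∫ x in {x : ℚ_[p] | ‖x‖ ≤ 1}, (Jα x : ℂ) * χ (ξ * x) ∂μ
        = (((max 1 ‖ξ‖) ^ (-α) : ℝ) : ℂ) := by
  intro ξ
  have unitBall_eq : {x : ℚ_[p] | ‖x‖ ≤ 1} = closedBall 0 1 := by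
    ext x
    exact mem_closedBall_zero_iff.symm
  rw [unitBall_eq] at hμ ⊢
  have measure_ball := measureReal_padic_closedBall μ hμ
  have fourier_series := hasSum_integral_ballSeries_mul_addChar μ hχ₁ hχ₂
    (c := fun n ↦ (besselCoeff p α n : ℂ))
    (by simpa only [measure_ball] using summable_norm_besselCoeff_mul_inv_pow hα) ξ
  have geometric_tail := Complex.hasSum_ofReal.2 (hasSum_besselCoeff_tail hα ξ)
  calc ∫ x in closedBall 0 1, (Jα x : ℂ) * χ (ξ * x) ∂μ
      = ∫ x in closedBall 0 1, (besselKernel p α x : ℂ) * χ (ξ * x) ∂μ := by rw [hJα]; rfl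
    _ = ∫ x, ballSeries (fun n ↦ (besselCoeff p α n : ℂ)) x * χ (ξ * x) ∂μ :=
      setIntegral_besselKernel_mul μ α _
    _ = (((max 1 ‖ξ‖) ^ (-α) : ℝ) : ℂ) := by
      refine fourier_series.unique (geometric_tail.congr_fun fun n ↦ ?_)
      rw [measure_ball]
      split_ifs <;> push_cast <;> rfl
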